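/- arXiv:2111.11963 — 2 statements merged into one kernel-verified Lean document; each statement's English description precedes it below -/
import Mathlib

section
/- For every reservation problem over a finite horizon T there exists a lottery solution (a finitely supported probability distribution over monotone sequences (Z^1,…,Z^T) of reservation tables) which is unbiased (E[Z^t_{ij}] = α_j·Q_i^t for all t, i, j), stays within department quota (almost surely Z^t_{ij} ∈ {⌊α_j·Q_i^t⌋, ⌈α_j·Q_i^t⌉} for all t, i, j), and approximately stays within university quota: for every period t and category j, writing x = α_j·∑_{i∈D} Q_i^t and S = ∑_{i∈D} Z^t_{ij}, if x > 0 then for every b with 0 < b ≤ x one has Pr[S − x ≥ b] ≤ exp(−b²/(3x)), and for every b > 0 one has Pr[S − x ≤ −b] ≤ exp(−b²/(2x)). -/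
open Finset
open scoped Classical

/-- Period-`t` cumulative vacancy count of department `i`: `Q_i^t = ∑_{s ≤ t} q_i^s`. -/
def cumQ {D : Type} {T : ℕ} (q : Fin T → D → ℕ) (t : Fin T) (i : D) : ℕ :=
  ∑ s ∈ Finset.univ.filter (fun s : Fin T => s ≤ t), q s i

/-!
In each department, a lottery fills the vacancies one at a time with categories. As `s` vacancies
become `s + 1`, the fair share of category `j` moves from `α j * s` to `α j * (s + 1)`. Cut
`[0, ∞)` into unit intervals, the tickets of category `j`: vacancy `s` takes the fraction of each
ticket that this move covers. Over all categories these fractions sum to one, and no ticket is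
taken more than once, so by Birkhoff–von Neumann they are the marginals of a random injective
assignment of tickets to vacancies. After `k` vacancies a ticket below `⌊α j * k⌋` is spent
entirely, hence almost surely handed out, and one from `⌈α j * k⌉` on is untouched, hence almost
surely not; so the quota holds for all `k` at once, whatever the number of vacancies per period.

The departments draw independently. A variable with mean `m` and values in some `[c, c + 1]` with
`0 ≤ c` has, by convexity of `exp`, a centred moment generating function at most that of a Poisson
variable of mean `m`. This bound adds up over departments, and Chernoff's method gives the tails.
-/

open MeasureTheory ProbabilityTheory

section RandomAssignment

theorem exists_measure_injective_of_mem_doublyStochastic {n : Type*} [Fintype n]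
    [MeasurableSpace n] [MeasurableSingletonClass n] {M : Matrix n n ℝ}
    (hM : M ∈ doublyStochastic ℝ n) :
    ∃ P : Measure (n → n), IsProbabilityMeasure P ∧ (∀ᵐ f ∂P, Function.Injective f) ∧
      ∀ i j, P.real {f | f i = j} = M i j := by
  obtain ⟨w, hw0, hw1, hwM⟩ := exists_eq_sum_perm_of_mem_doublyStochastic hM
  let P : Measure (n → n) := ∑ σ : Equiv.Perm n, ENNReal.ofReal (w σ) • Measure.dirac ⇑σ
  have hP (A : Set (n → n)) : P.real A = ∑ σ : Equiv.Perm n, if ⇑σ ∈ A then w σ else 0 := by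
    rw [measureReal_def, Measure.finsetSum_apply, ENNReal.toReal_sum]
    · refine sum_congr rfl fun σ _ => ?_
      by_cases h : ⇑σ ∈ A <;> simp [h, hw0 σ]
    · intro σ _
      exact (ENNReal.mul_lt_top ENNReal.ofReal_lt_top (measure_lt_top _ A)).ne
  refine ⟨P, ⟨?_⟩, ?_, fun i j => ?_⟩
  · simpa [hw1, measureReal_def, ENNReal.toReal_eq_one_iff] using hP Set.univ
  · simp only [P, ae_finsetSum_measure_iff]
    exact fun σ _ => Measure.ae_smul_measure ((ae_dirac_iff (Set.toFinite _).measurableSet).2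
      σ.injective) _
  · rw [hP, ← hwM, Matrix.sum_apply]
    simp [Equiv.toPEquiv_apply]

theorem fromBlocks_mem_doublyStochastic {R S : Type*} [Fintype R] [Fintype S] {X : Matrix R S ℝ}
    (h0 : ∀ s c, 0 ≤ X s c) (hrow : ∀ s, ∑ c, X s c = 1) (hcol : ∀ c, ∑ s, X s c ≤ 1) :
    Matrix.fromBlocks 0 X X.transpose (Matrix.diagonal fun c => 1 - ∑ s, X s c) ∈
      doublyStochastic ℝ (R ⊕ S) := by
  refine mem_doublyStochastic_iff_sum.2 ⟨?_, ?_, ?_⟩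
  · rintro (s | c) (s' | c')
    · exact le_rfl
    · exact h0 s c'
    · exact h0 s' c
    · by_cases h : c = c' <;> simp [h, hcol]
  · rintro (s | c) <;> simp [hrow, Matrix.diagonal_apply]
  · rintro (s | c) <;> simp [hrow, Matrix.diagonal_apply]

theorem exists_measure_injective_of_fractional_assignment {R S : Type*} [Fintype R] [Fintype S]
    [MeasurableSpace S] [MeasurableSingletonClass S] {X : R → S → ℝ} (h0 : ∀ s c, 0 ≤ X s c)
    (hrow : ∀ s, ∑ c, X s c = 1) (hcol : ∀ c, ∑ s, X s c ≤ 1) :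
    ∃ P : Measure (R → S), IsProbabilityMeasure P ∧ (∀ᵐ f ∂P, Function.Injective f) ∧
      ∀ s c, P.real {f | f s = c} = X s c := by
  let _ : MeasurableSpace (R ⊕ S) := ⊤
  have : DiscreteMeasurableSpace (R ⊕ S) := ⟨fun _ => trivial⟩
  obtain ⟨P, _, hinj, hlaw⟩ := exists_measure_injective_of_mem_doublyStochastic
    (fromBlocks_mem_doublyStochastic (X := Matrix.of X) h0 hrow hcol)
  have hblock : ∀ᵐ f ∂P, ∃ g : R → S, ∀ s, f (.inl s) = .inr (g s) := by
    have hzero (s s' : R) : ∀ᵐ f ∂P, f (.inl s) ≠ .inl s' := by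
      simpa [ae_iff, measureReal_eq_zero_iff] using hlaw (.inl s) (.inl s')
    filter_upwards [ae_all_iff.2 fun s => ae_all_iff.2 (hzero s)] with f hf
    have hright (s : R) : ∃ c, f (.inl s) = .inr c := by
      rcases h : f (.inl s) with s' | c
      · exact (hf s s' h).elim
      · exact ⟨c, rfl⟩
    choose g hg using hright
    exact ⟨g, hg⟩
  have : Nonempty (R → S) := let ⟨_, g, _⟩ := hblock.exists; ⟨g⟩
  choose! restr hrestr using
    fun (f : R ⊕ S → R ⊕ S) (hf : ∃ g : R → S, ∀ s, f (.inl s) = .inr (g s)) => hf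
  have hmeas : Measurable restr := measurable_of_finite _
  refine ⟨P.map restr, Measure.isProbabilityMeasure_map hmeas.aemeasurable, ?_, fun s c => ?_⟩
  · rw [ae_map_iff hmeas.aemeasurable (Set.toFinite _).measurableSet]
    filter_upwards [hinj, hblock] with f hf hex s s' h
    exact Sum.inl_injective (hf (by rw [hrestr f hex, hrestr f hex, h]))
  · rw [map_measureReal_apply hmeas (Set.toFinite _).measurableSet]
    refine (measureReal_congr (Filter.eventuallyEq_set.2 ?_)).trans (hlaw (.inl s) (.inr c))
    filter_upwards [hblock] with f hex
    simp [hrestr f hex]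

theorem measureReal_exists_eq_of_ae_injective {R S : Type*} [MeasurableSpace S]
    [MeasurableSingletonClass S] {P : Measure (R → S)} [IsFiniteMeasure P]
    (hinj : ∀ᵐ f ∂P, Function.Injective f) (A : Finset R) (c : S) :
    P.real {f | ∃ s ∈ A, f s = c} = ∑ s ∈ A, P.real {f | f s = c} := by
  rw [← measureReal_biUnion_finset₀]
  · congr 1
    ext f
    simp
  · intro s _ s' _ hne
    refine measure_mono_null (fun f hf => ?_) (ae_iff.1 hinj)
    exact fun h => hne (h (hf.1.trans hf.2.symm))
  · have hmeas (s : R) : MeasurableSet {f : R → S | f s = c} :=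
      (measurableSet_singleton c).preimage (measurable_pi_apply s)
    exact fun s _ => (hmeas s).nullMeasurableSet

end RandomAssignment

section Tickets

/-- The length of the part of the interval `[0, y]` lying in the `r`-th unit interval
`[r, r + 1]`. -/
noncomputable def unitOverlap (r : ℕ) (y : ℝ) : ℝ := max 0 (min 1 (y - r))

theorem unitOverlap_le_one (r : ℕ) (y : ℝ) : unitOverlap r y ≤ 1 :=
  max_le zero_le_one (min_le_left _ _)

theorem unitOverlap_mono (r : ℕ) : Monotone (unitOverlap r) := fun _ _ h => by
  unfold unitOverlap; gcongr

theorem unitOverlap_eq_one {r : ℕ} {y : ℝ} (h : r + 1 ≤ y) : unitOverlap r y = 1 := by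
  rw [unitOverlap, min_eq_left (by linarith), max_eq_right zero_le_one]

theorem unitOverlap_eq_zero {r : ℕ} {y : ℝ} (h : y ≤ r) : unitOverlap r y = 0 :=
  max_eq_left ((min_le_right _ _).trans (sub_nonpos.2 h))

theorem sum_range_unitOverlap {y : ℝ} (hy : 0 ≤ y) (n : ℕ) :
    ∑ r ∈ range n, unitOverlap r y = min y n := by
  induction n with
  | zero => simp [hy]
  | succ n ih =>
    rw [sum_range_succ, ih, unitOverlap]
    push_cast
    grind

theorem sum_fin_unitOverlap {y : ℝ} {n : ℕ} (hy : 0 ≤ y) (hn : y ≤ n) :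
    ∑ r : Fin n, unitOverlap r y = y := by
  rw [Fin.sum_univ_eq_sum_range (unitOverlap · y), sum_range_unitOverlap hy, min_eq_left hn]

/-- When the vacancies of a department are filled one at a time, the fair share of a category with
fraction `a` moves from `a * s` to `a * (s + 1)` at vacancy `s`. This is the length of the part of
`[a * s, a * (s + 1)]` in the `r`-th unit interval: the fraction of the `r`-th ticket of the
category that is spent on vacancy `s`. -/
noncomputable def ticketShare (a : ℝ) (s r : ℕ) : ℝ :=
  unitOverlap r (a * (s + 1 : ℕ)) - unitOverlap r (a * s)

theorem ticketShare_nonneg {a : ℝ} (ha : 0 ≤ a) (s r : ℕ) : 0 ≤ ticketShare a s r :=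
  sub_nonneg.2 (unitOverlap_mono r (by gcongr; exact s.le_succ))

theorem mul_natCast_le_of_le {a : ℝ} (ha : a ≤ 1) {k K : ℕ} (hk : k ≤ K) : a * k ≤ K :=
  (mul_le_of_le_one_left k.cast_nonneg ha).trans (Nat.cast_le.2 hk)

theorem sum_ticketShare_tickets {a : ℝ} (ha0 : 0 ≤ a) (ha1 : a ≤ 1) {s K : ℕ} (hs : s < K) :
    ∑ r : Fin K, ticketShare a s r = a := by
  simp only [ticketShare, sum_sub_distrib]
  rw [sum_fin_unitOverlap (by positivity) (mul_natCast_le_of_le ha1 hs),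
    sum_fin_unitOverlap (by positivity) (mul_natCast_le_of_le ha1 hs.le)]
  push_cast
  ring

theorem sum_ticketShare_prefix {a : ℝ} (r : ℕ) {k K : ℕ} (hk : k ≤ K) :
    ∑ s : Fin K with s.val < k, ticketShare a s r = unitOverlap r (a * k) := by
  have hrange : (range K).filter (· < k) = range k := by
    ext s
    simp only [mem_filter, mem_range]
    omega
  rw [sum_filter, Fin.sum_univ_eq_sum_range (fun s => if s < k then ticketShare a s r else 0),
    ← sum_filter, hrange]
  simp only [ticketShare]
  rw [sum_range_sub (fun s : ℕ => unitOverlap r (a * s)), Nat.cast_zero, mul_zero,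
    unitOverlap_eq_zero r.cast_nonneg, sub_zero]

variable {C : Type*} [MeasurableSpace C] {α : C → ℝ} {K : ℕ}

/-- A lottery handing a ticket `(j, r)`, the `r`-th one of category `j`, to every vacancy: no ticket
is used twice, and the marginals are the ticket shares. -/
structure IsTicketLottery (α : C → ℝ) (P : Measure (Fin K → C × Fin K)) : Prop where
  ae_injective : ∀ᵐ f ∂P, Function.Injective f
  measureReal_eq : ∀ s c, P.real {f | f s = c} = ticketShare (α c.1) s c.2

theorem exists_isTicketLottery [Fintype C] [MeasurableSingletonClass C] (hα0 : ∀ j, 0 ≤ α j)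
    (hαsum : ∑ j, α j = 1) (K : ℕ) :
    ∃ P : Measure (Fin K → C × Fin K), IsProbabilityMeasure P ∧ IsTicketLottery α P := by
  have hα1 (j : C) : α j ≤ 1 := hαsum ▸ single_le_sum (fun i _ => hα0 i) (mem_univ j)
  let X (s : Fin K) (c : C × Fin K) : ℝ := ticketShare (α c.1) s c.2
  have hrow (s : Fin K) : ∑ c, X s c = 1 := by
    simp only [X, Fintype.sum_prod_type, sum_ticketShare_tickets (hα0 _) (hα1 _) s.isLt, hαsum]
  have hcol (c : C × Fin K) : ∑ s, X s c ≤ 1 := by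
    have hprefix := sum_ticketShare_prefix (a := α c.1) c.2 (le_refl K)
    simp only [Fin.is_lt, filter_true] at hprefix
    exact hprefix.trans_le (unitOverlap_le_one _ _)
  obtain ⟨P, hP, hinj, hlaw⟩ := exists_measure_injective_of_fractional_assignment (X := X)
    (fun s c => ticketShare_nonneg (hα0 c.1) s c.2) hrow hcol
  exact ⟨P, hP, hinj, hlaw⟩

namespace IsTicketLottery

variable [MeasurableSingletonClass C] {P : Measure (Fin K → C × Fin K)} [IsProbabilityMeasure P]
  {k : ℕ} {c : C × Fin K}

theorem measureReal_used (hP : IsTicketLottery α P) (hk : k ≤ K) (c : C × Fin K) :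
    P.real {f | ∃ s : Fin K, s < k ∧ f s = c} = unitOverlap c.2 (α c.1 * k) := by
  have hunion := measureReal_exists_eq_of_ae_injective hP.ae_injective {s : Fin K | s.val < k} c
  simpa only [mem_filter_univ, hP.measureReal_eq, sum_ticketShare_prefix _ hk] using hunion

theorem ae_used [Finite C] (hP : IsTicketLottery α P) (hk : k ≤ K) (hc : c.2 < ⌊α c.1 * k⌋₊) :
    ∀ᵐ f ∂P, ∃ s : Fin K, s < k ∧ f s = c := by
  have hone := unitOverlap_eq_one (y := α c.1 * k)
    (by exact_mod_cast (Nat.le_floor_iff' c.2.val.succ_ne_zero).1 hc)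
  rw [← hP.measureReal_used hk, measureReal_def, ENNReal.toReal_eq_one_iff] at hone
  exact (mem_ae_iff_prob_eq_one (Set.toFinite _).measurableSet).2 hone

theorem ae_not_used (hP : IsTicketLottery α P) (hk : k ≤ K) (hc : ⌈α c.1 * k⌉₊ ≤ c.2) :
    ∀ᵐ f ∂P, ¬ ∃ s : Fin K, s < k ∧ f s = c := by
  have hzero := unitOverlap_eq_zero (Nat.ceil_le.1 hc)
  rw [← hP.measureReal_used hk, measureReal_eq_zero_iff] at hzero
  simpa only [ae_iff, not_not] using hzero

end IsTicketLottery

end Tickets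

section SeatLotteries

/-- The number of the first `k` vacancies reserved for category `j`, when vacancy `s` is reserved
for `c s`. -/
noncomputable def seatCount {C : Type*} {K : ℕ} (c : Fin K → C) (k : ℕ) (j : C) : ℕ :=
  #{s : Fin K | s.val < k ∧ c s = j}

variable {C : Type*} {K : ℕ}

theorem seatCount_mono (c : Fin K → C) (j : C) : Monotone (seatCount c · j) := fun _ _ hk =>
  card_le_card (monotone_filter_right _ fun _ _ hs => ⟨hs.1.trans_le hk, hs.2⟩)

theorem sum_seatCount [Fintype C] (c : Fin K → C) {k : ℕ} (hk : k ≤ K) :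
    ∑ j, seatCount c k j = k := by
  simp only [seatCount, ← filter_filter]
  rw [← card_eq_sum_card_fiberwise (f := c) (t := univ) fun _ _ => mem_univ _,
    Fin.card_filter_val_lt, min_eq_right hk]

theorem seatCount_mem_Icc_of_tickets {f : Fin K → C × Fin K} (hf : Function.Injective f) {j : C}
    {k a b : ℕ} (ha : a ≤ K) (hlow : ∀ r : Fin K, r < a → ∃ s : Fin K, s < k ∧ f s = (j, r))
    (hup : ∀ r : Fin K, b ≤ r → ¬ ∃ s : Fin K, s < k ∧ f s = (j, r)) :
    seatCount (fun s => (f s).1) k j ∈ Set.Icc a b := by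
  constructor
  · rw [← card_range a]
    refine card_le_card_of_surjOn (fun s => (f s).2.val) fun r hr => ?_
    obtain ⟨s, hs, hfs⟩ := hlow ⟨r, (by simpa using hr : r < a).trans_le ha⟩ (by simpa using hr)
    exact ⟨s, by simp [hs, hfs], by simp [hfs]⟩
  · rw [← card_range b]
    refine card_le_card_of_injOn (fun s => (f s).2.val) (fun s hs => ?_) fun s hs s' hs' h => ?_
    · have hs : s < k ∧ (f s).1 = j := by simpa using hs
      by_contra hb
      exact hup (f s).2 (by simpa using hb) ⟨s, hs.1, Prod.ext hs.2 rfl⟩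
    · have hs : s < k ∧ (f s).1 = j := by simpa using hs
      have hs' : s' < k ∧ (f s').1 = j := by simpa using hs'
      exact hf (Prod.ext (hs.2.trans hs'.2.symm) (Fin.ext h))

variable [MeasurableSpace C]

/-- A lottery for a single department with `K` vacancies, as a law `P` on the assignments of a
category to each of them: every vacancy is unbiased, and after any number of vacancies every
category is within quota. -/
structure IsSeatLottery (α : C → ℝ) (P : Measure (Fin K → C)) : Prop where
  measureReal_eq : ∀ s j, P.real {c | c s = j} = α j
  ae_seatCount_mem : ∀ᵐ c ∂P, ∀ k ≤ K, ∀ j, seatCount c k j ∈ Set.Icc ⌊α j * k⌋₊ ⌈α j * k⌉₊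

variable [MeasurableSingletonClass C] {α : C → ℝ}

theorem exists_isSeatLottery [Fintype C] (hα0 : ∀ j, 0 ≤ α j) (hαsum : ∑ j, α j = 1) (K : ℕ) :
    ∃ P : Measure (Fin K → C), IsProbabilityMeasure P ∧ IsSeatLottery α P := by
  obtain ⟨P, _, hP⟩ := exists_isTicketLottery hα0 hαsum K
  have hα1 (j : C) : α j ≤ 1 := hαsum ▸ single_le_sum (fun i _ => hα0 i) (mem_univ j)
  have hmeas : Measurable fun (f : Fin K → C × Fin K) s => (f s).1 := measurable_of_finite _
  refine ⟨P.map _, Measure.isProbabilityMeasure_map hmeas.aemeasurable, ⟨fun s j => ?_, ?_⟩⟩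
  · have hunion : (fun (f : Fin K → C × Fin K) s => (f s).1) ⁻¹' {c | c s = j} =
        ⋃ r ∈ (univ : Finset (Fin K)), {f | f s = (j, r)} := by
      ext f
      simp [Prod.ext_iff]
    rw [map_measureReal_apply hmeas (Set.toFinite _).measurableSet, hunion,
      measureReal_biUnion_finset _ fun _ _ => (Set.toFinite _).measurableSet]
    · simp only [hP.measureReal_eq, sum_ticketShare_tickets (hα0 j) (hα1 j) s.isLt]
    · intro r _ r' _ hne
      exact Set.disjoint_left.2 fun f hr hr' => hne (congrArg Prod.snd (hr.symm.trans hr'))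
  · rw [ae_map_iff hmeas.aemeasurable (Set.toFinite _).measurableSet]
    simp only [ae_all_iff]
    intro k hk j
    have hlow := ae_all_iff.2 fun r : Fin K => ae_all_iff.2 fun hr : r < ⌊α j * k⌋₊ =>
      hP.ae_used hk (c := (j, r)) hr
    have hup := ae_all_iff.2 fun r : Fin K => ae_all_iff.2 fun hr : ⌈α j * k⌉₊ ≤ r =>
      hP.ae_not_used hk (c := (j, r)) hr
    filter_upwards [hP.ae_injective, hlow, hup] with f hf hlow hup
    exact seatCount_mem_Icc_of_tickets hf
      (Nat.floor_le_of_le (mul_natCast_le_of_le (hα1 j) hk)) hlow hup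

theorem IsSeatLottery.integral_seatCount [Finite C] {P : Measure (Fin K → C)}
    [IsProbabilityMeasure P] (hP : IsSeatLottery α P) {k : ℕ} (hk : k ≤ K) (j : C) :
    ∫ c, (seatCount c k j : ℝ) ∂P = α j * k := by
  have hindicator (c : Fin K → C) : (seatCount c k j : ℝ) =
      ∑ s : Fin K with s.val < k, Set.indicator {c | c s = j} 1 c := by
    rw [seatCount, ← filter_filter, card_filter]
    push_cast
    simp only [Set.indicator_apply, Set.mem_ofPred_eq, Pi.one_apply]
  simp only [hindicator]
  rw [integral_finsetSum _ fun _ _ => .of_finite]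
  simp [integral_indicator_one (Set.toFinite _).measurableSet, hP.measureReal_eq,
    Fin.card_filter_val_lt, min_eq_right hk, mul_comm]

end SeatLotteries

section SubPoisson

variable {Ω : Type*} [MeasurableSpace Ω]

/-- A real random variable whose moment generating function is at most that of a centred Poisson
variable of variance `v`. -/
structure HasSubPoissonMGF (X : Ω → ℝ) (v : ℝ) (P : Measure Ω) : Prop where
  integrable_exp_mul : ∀ t : ℝ, Integrable (fun ω => Real.exp (t * X ω)) P
  mgf_le : ∀ t : ℝ, mgf X P t ≤ Real.exp (v * (Real.exp t - 1 - t))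

theorem exp_mul_le_one_add_mul {y : ℝ} (hy : y ∈ Set.Icc (0 : ℝ) 1) (t : ℝ) :
    Real.exp (t * y) ≤ 1 + y * (Real.exp t - 1) := by
  have h := convexOn_exp.2 (Set.mem_univ 0) (Set.mem_univ t) (sub_nonneg.2 hy.2) hy.1
    (sub_add_cancel 1 y)
  simp only [smul_eq_mul, mul_zero, zero_add, Real.exp_zero, mul_one, mul_comm y t] at h
  linarith

theorem exp_sub_one_sub_le_of_nonneg {t : ℝ} (h0 : 0 ≤ t) (h1 : t ≤ 1) :
    Real.exp t - 1 - t ≤ 3 / 4 * t ^ 2 := by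
  have h := Real.exp_bound' h0 h1 (n := 2) (by norm_num)
  norm_num [sum_range_succ, Nat.factorial] at h
  linarith

theorem exp_neg_le_quadratic {t : ℝ} (ht : 0 ≤ t) : Real.exp (-t) ≤ 1 - t + t ^ 2 / 2 := by
  rw [Real.exp_neg, inv_le_iff_one_le_mul₀ (Real.exp_pos t)]
  calc 1 ≤ 1 + t ^ 4 / 4 := by linarith [show 0 ≤ t ^ 4 by positivity]
    _ = (1 - t + t ^ 2 / 2) * (1 + t + t ^ 2 / 2) := by ring
    _ ≤ (1 - t + t ^ 2 / 2) * Real.exp t := by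
      gcongr
      · nlinarith [sq_nonneg (t - 1)]
      · exact Real.quadratic_le_exp_of_nonneg ht

namespace HasSubPoissonMGF

variable {P : Measure Ω} {X : Ω → ℝ} {v b : ℝ}

theorem sub_integral_of_mem_Icc [IsProbabilityMeasure P] (hX : AEMeasurable X P) {c : ℝ}
    (hc : 0 ≤ c) (hmem : ∀ᵐ ω ∂P, X ω ∈ Set.Icc c (c + 1)) :
    HasSubPoissonMGF (fun ω => X ω - P[X]) P[X] P := by
  have hint : Integrable X P := .of_mem_Icc c (c + 1) hX hmem
  have hexp (t : ℝ) : Integrable (fun ω => Real.exp (t * (X ω - P[X]))) P :=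
    integrable_exp_mul_of_mem_Icc (a := c - P[X]) (b := c + 1 - P[X]) (hX.sub_const _) <| by
      filter_upwards [hmem] with ω hω
      exact ⟨sub_le_sub_right hω.1 _, sub_le_sub_right hω.2 _⟩
  refine ⟨hexp, fun t => ?_⟩
  set m := P[X]
  calc mgf (fun ω => X ω - m) P t
      ≤ ∫ ω, Real.exp (t * (c - m)) * (1 + (X ω - c) * (Real.exp t - 1)) ∂P := by
        refine integral_mono_ae (hexp t) (by fun_prop) ?_
        filter_upwards [hmem] with ω hω
        rw [show t * (X ω - m) = t * (c - m) + t * (X ω - c) by ring, Real.exp_add]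
        gcongr
        exact exp_mul_le_one_add_mul ⟨sub_nonneg.2 hω.1, sub_le_iff_le_add'.2 hω.2⟩ t
    _ = Real.exp (t * (c - m)) * (1 + (m - c) * (Real.exp t - 1)) := by
        rw [integral_const_mul, integral_add (by fun_prop) (by fun_prop), integral_mul_const,
          integral_sub hint (by fun_prop)]
        simp [m]
    _ ≤ Real.exp (t * (c - m)) * Real.exp ((m - c) * (Real.exp t - 1)) := by
        gcongr
        linarith [Real.add_one_le_exp ((m - c) * (Real.exp t - 1))]
    _ = Real.exp ((m - c) * (Real.exp t - 1 - t)) := by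
        rw [← Real.exp_add]
        ring_nf
    _ ≤ Real.exp (m * (Real.exp t - 1 - t)) := by
        gcongr
        · linarith [Real.add_one_le_exp t]
        · linarith

theorem of_map {Ω' : Type*} [MeasurableSpace Ω'] {P : Measure Ω'} {Y : Ω' → Ω}
    (hY : AEMeasurable Y P) (h : HasSubPoissonMGF X v (P.map Y)) :
    HasSubPoissonMGF (X ∘ Y) v P where
  integrable_exp_mul t := (h.integrable_exp_mul t).comp_aemeasurable hY
  mgf_le t := (mgf_map hY (h.integrable_exp_mul t).1).symm.trans_le (h.mgf_le t)

theorem sum_of_iIndepFun [IsFiniteMeasure P] {ι : Type*} {X : ι → Ω → ℝ} {v : ι → ℝ}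
    (hindep : iIndepFun X P) (hX : ∀ i, Measurable (X i)) (s : Finset ι)
    (h : ∀ i ∈ s, HasSubPoissonMGF (X i) (v i) P) :
    HasSubPoissonMGF (∑ i ∈ s, X i) (∑ i ∈ s, v i) P where
  integrable_exp_mul t :=
    hindep.integrable_exp_mul_sum hX fun i hi => (h i hi).integrable_exp_mul t
  mgf_le t := by
    rw [hindep.mgf_sum hX, sum_mul, Real.exp_sum]
    exact prod_le_prod (fun _ _ => mgf_nonneg) fun i hi => (h i hi).mgf_le t

variable [IsFiniteMeasure P]

theorem measureReal_ge_le (h : HasSubPoissonMGF X v P) (hv : 0 < v) (hb : 0 ≤ b) (hbv : b ≤ v) :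
    P.real {ω | b ≤ X ω} ≤ Real.exp (-(b ^ 2 / (3 * v))) := by
  -- `3 / 4 * v * t ^ 2 - t * b` is minimal at this `t`
  set t := 2 / 3 * (b / v) with ht
  have ht0 : 0 ≤ t := by positivity
  have ht1 : t ≤ 1 := by linarith [(div_le_one hv).2 hbv]
  calc P.real {ω | b ≤ X ω} ≤ Real.exp (-t * b) * mgf X P t :=
        measure_ge_le_exp_mul_mgf b ht0 (h.integrable_exp_mul t)
    _ ≤ Real.exp (-t * b) * Real.exp (v * (Real.exp t - 1 - t)) := by
        gcongr
        exact h.mgf_le t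
    _ ≤ Real.exp (-t * b) * Real.exp (v * (3 / 4 * t ^ 2)) := by
        gcongr
        exact exp_sub_one_sub_le_of_nonneg ht0 ht1
    _ = Real.exp (-(b ^ 2 / (3 * v))) := by
        rw [← Real.exp_add, ht]
        field_simp
        ring_nf

theorem measureReal_le_neg_le (h : HasSubPoissonMGF X v P) (hv : 0 < v) (hb : 0 ≤ b) :
    P.real {ω | X ω ≤ -b} ≤ Real.exp (-(b ^ 2 / (2 * v))) := by
  set t := b / v with ht
  have ht0 : 0 ≤ t := by positivity
  calc P.real {ω | X ω ≤ -b} ≤ Real.exp (-(-t) * -b) * mgf X P (-t) :=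
        measure_le_le_exp_mul_mgf (-b) (neg_nonpos.2 ht0) (h.integrable_exp_mul (-t))
    _ ≤ Real.exp (-(-t) * -b) * Real.exp (v * (Real.exp (-t) - 1 - -t)) := by
        gcongr
        exact h.mgf_le (-t)
    _ ≤ Real.exp (-(-t) * -b) * Real.exp (v * (t ^ 2 / 2)) := by
        gcongr
        linarith [exp_neg_le_quadratic ht0]
    _ = Real.exp (-(b ^ 2 / (2 * v))) := by
        rw [← Real.exp_add, ht]
        field_simp
        ring_nf

end HasSubPoissonMGF

end SubPoisson

section IndependentDepartments

namespace IsSeatLottery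

variable {C D : Type*} [MeasurableSpace C] [Fintype D] {K : ℕ} {α : C → ℝ}
  {P : Measure (Fin K → C)} [IsProbabilityMeasure P]

theorem ae_pi_seatCount_mem (hP : IsSeatLottery α P) :
    ∀ᵐ ω ∂Measure.pi fun _ : D => P,
      ∀ i, ∀ k ≤ K, ∀ j, seatCount (ω i) k j ∈ Set.Icc ⌊α j * k⌋₊ ⌈α j * k⌉₊ :=
  ae_all_iff.2 fun i =>
    (measurePreserving_eval (fun _ : D => P) i).quasiMeasurePreserving.ae hP.ae_seatCount_mem

variable [MeasurableSingletonClass C] [Finite C]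

theorem integral_pi_seatCount (hP : IsSeatLottery α P) {k : ℕ} (hk : k ≤ K) (i : D) (j : C) :
    ∫ ω, (seatCount (ω i) k j : ℝ) ∂Measure.pi (fun _ : D => P) = α j * k := by
  have hmeas : AEStronglyMeasurable (fun c => (seatCount c k j : ℝ)) P :=
    (measurable_of_finite _).aestronglyMeasurable
  rw [integral_comp_eval (μ := fun _ : D => P) (f := fun c => (seatCount c k j : ℝ)) hmeas]
  exact hP.integral_seatCount hk j

theorem hasSubPoissonMGF (hP : IsSeatLottery α P) {k : ℕ} (hk : k ≤ K) (j : C) :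
    HasSubPoissonMGF (fun c => (seatCount c k j : ℝ) - α j * k) (α j * k) P := by
  rw [← hP.integral_seatCount hk j]
  refine .sub_integral_of_mem_Icc (measurable_of_finite _).aemeasurable
    (c := ⌊α j * k⌋₊) (Nat.cast_nonneg _) ?_
  filter_upwards [hP.ae_seatCount_mem] with c hc
  obtain ⟨hfloor, hceil⟩ := hc k hk j
  exact ⟨mod_cast hfloor, mod_cast hceil.trans (Nat.ceil_le_floor_add_one _)⟩

theorem hasSubPoissonMGF_pi (hP : IsSeatLottery α P) {Q : D → ℕ} (hQ : ∀ i, Q i ≤ K) (j : C) :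
    HasSubPoissonMGF
      (fun ω => ((∑ i, seatCount (ω i) (Q i) j : ℕ) : ℝ) - α j * ((∑ i, Q i : ℕ) : ℝ))
      (α j * ((∑ i, Q i : ℕ) : ℝ)) (Measure.pi fun _ : D => P) := by
  let X (i : D) (c : Fin K → C) : ℝ := seatCount c (Q i) j - α j * Q i
  have hX (i : D) : Measurable (X i) := measurable_of_finite _
  have heval (i : D) : HasSubPoissonMGF (X i ∘ Function.eval i) (α j * Q i)
      (Measure.pi fun _ : D => P) := by
    refine .of_map (measurable_pi_apply i).aemeasurable ?_
    rw [(measurePreserving_eval _ i).map_eq]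
    exact hP.hasSubPoissonMGF (hQ i) j
  have hsum := HasSubPoissonMGF.sum_of_iIndepFun (iIndepFun_pi fun i => (hX i).aemeasurable)
    (fun i => (hX i).comp (measurable_pi_apply i)) univ fun i _ => heval i
  convert hsum using 1
  · ext ω
    simp [X, mul_sum]
  · push_cast
    rw [mul_sum]

end IsSeatLottery

end IndependentDepartments

theorem exists_fin_weights {Ω : Type*} [Finite Ω] [MeasurableSpace Ω] [MeasurableSingletonClass Ω]
    (P : Measure Ω) [IsProbabilityMeasure P] :
    ∃ (N : ℕ) (p : Fin N → ℝ) (e : Fin N → Ω), (∀ a, 0 ≤ p a) ∧ ∑ a, p a = 1 ∧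
      (∀ A : Ω → Prop, (∀ᵐ ω ∂P, A ω) → ∀ a, p a ≠ 0 → A (e a)) ∧
      (∀ g : Ω → ℝ, ∑ a, p a * g (e a) = ∫ ω, g ω ∂P) ∧
      ∀ (A : Ω → Prop) [DecidablePred A], ∑ a with A (e a), p a = P.real {ω | A ω} := by
  have := Fintype.ofFinite Ω
  let e : Fin (Fintype.card Ω) ≃ Ω := (Fintype.equivFin Ω).symm
  have hintegral (g : Ω → ℝ) : ∑ a, P.real {e a} * g (e a) = ∫ ω, g ω ∂P :=
    (e.sum_comp fun ω => P.real {ω} * g ω).trans (integral_fintype .of_finite).symm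
  refine ⟨_, fun a => P.real {e a}, e, fun a => measureReal_nonneg, ?_, ?_, hintegral, ?_⟩
  · simpa using hintegral 1
  · refine fun A hA a ha => by_contra fun hAa => ha ?_
    have hsubset : {e a} ⊆ {ω | ¬ A ω} := Set.singleton_subset_iff.2 hAa
    exact (measureReal_eq_zero_iff).2 (measure_mono_null hsubset (ae_iff.1 hA))
  · intro A _
    rw [sum_filter, ← integral_indicator_one (Set.toFinite _).measurableSet, ← hintegral]
    simp [Set.indicator_apply]

theorem eq_floor_or_eq_ceil_of_mem_Icc {n : ℕ} {x : ℝ} (hx : 0 ≤ x)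
    (hn : n ∈ Set.Icc ⌊x⌋₊ ⌈x⌉₊) : (n : ℤ) = ⌊x⌋ ∨ (n : ℤ) = ⌈x⌉ := by
  obtain ⟨hfloor, hceil⟩ := hn
  have hgap := Nat.ceil_le_floor_add_one x
  rw [← Int.natCast_floor_eq_floor hx, ← Int.natCast_ceil_eq_ceil hx]
  omega

theorem cumQ_mono {D : Type} {T : ℕ} (q : Fin T → D → ℕ) : Monotone (cumQ q) := fun _ _ ht _ =>
  sum_le_sum_of_subset (monotone_filter_right _ fun _ _ hs => hs.trans ht)

theorem cumQ_le_sum {D : Type} [Fintype D] {T : ℕ} (q : Fin T → D → ℕ) (t : Fin T) (i : D) :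
    cumQ q t i ≤ ∑ i, ∑ s, q s i :=
  (sum_le_sum_of_subset (filter_subset _ _)).trans
    (single_le_sum (f := fun i => ∑ s, q s i) (fun _ _ => Nat.zero_le _) (mem_univ i))

/-- For every reservation problem over a finite horizon T there
exists a finitely supported lottery over monotone sequences of reservation
tables that is unbiased, stays within department quota almost surely, and
approximately stays within university quota, with Chernoff-type tail bounds on
the deviation of each university-level column total from its fair share. -/
theorem lottery_approximately_within_university_quota
    (D C : Type) [Fintype D] [Fintype C]
    (hD : 2 ≤ Fintype.card D) (hC : 2 ≤ Fintype.card C)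
    (α : C → ℝ) (hα0 : ∀ j, 0 < α j) (hα1 : ∀ j, α j < 1)
    (hαsum : ∑ j, α j = 1)
    (T : ℕ) (q : Fin T → D → ℕ) :
    ∃ (N : ℕ) (p : Fin N → ℝ) (Z : Fin N → Fin T → D → C → ℕ),
      (∀ a, 0 ≤ p a) ∧ (∑ a, p a = 1) ∧
      (∀ a t i, ∑ j, Z a t i j = cumQ q t i) ∧
      (∀ a (t t' : Fin T), t ≤ t' → ∀ i j, Z a t i j ≤ Z a t' i j) ∧
      (∀ a, p a ≠ 0 → ∀ t i j,
        ((Z a t i j : ℕ) : ℤ) = ⌊α j * ((cumQ q t i : ℕ) : ℝ)⌋ ∨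
        ((Z a t i j : ℕ) : ℤ) = ⌈α j * ((cumQ q t i : ℕ) : ℝ)⌉) ∧
      (∀ t i j, ∑ a, p a * ((Z a t i j : ℕ) : ℝ) = α j * ((cumQ q t i : ℕ) : ℝ)) ∧
      (∀ (t : Fin T) (j : C),
        0 < α j * ((∑ i, cumQ q t i : ℕ) : ℝ) →
          ((∀ b : ℝ, 0 < b → b ≤ α j * ((∑ i, cumQ q t i : ℕ) : ℝ) →
            ∑ a ∈ Finset.univ.filter (fun a : Fin N =>
                b ≤ ((∑ i, Z a t i j : ℕ) : ℝ) - α j * ((∑ i, cumQ q t i : ℕ) : ℝ)), p a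
              ≤ Real.exp (-(b ^ 2 / (3 * (α j * ((∑ i, cumQ q t i : ℕ) : ℝ)))))) ∧
          (∀ b : ℝ, 0 < b →
            ∑ a ∈ Finset.univ.filter (fun a : Fin N =>
                ((∑ i, Z a t i j : ℕ) : ℝ) - α j * ((∑ i, cumQ q t i : ℕ) : ℝ) ≤ -b), p a
              ≤ Real.exp (-(b ^ 2 / (2 * (α j * ((∑ i, cumQ q t i : ℕ) : ℝ)))))))) := by
  let _ : MeasurableSpace C := ⊤
  have : DiscreteMeasurableSpace C := ⟨fun _ => trivial⟩
  obtain ⟨P, _, hP⟩ := exists_isSeatLottery (fun j => (hα0 j).le) hαsum (∑ i, ∑ s, q s i)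
  obtain ⟨N, p, e, hp0, hp1, hae, hintegral, hprob⟩ :=
    exists_fin_weights (Measure.pi fun _ : D => P)
  have htail (t : Fin T) (j : C) := hP.hasSubPoissonMGF_pi (cumQ_le_sum q t) j
  refine ⟨N, p, fun a t i j => seatCount (e a i) (cumQ q t i) j, hp0, hp1,
    fun a t i => sum_seatCount _ (cumQ_le_sum q t i),
    fun a t t' ht i j => seatCount_mono _ j (cumQ_mono q ht i),
    fun a ha t i j => ?quota, fun t i j => ?unbiased,
    fun t j hx => ⟨fun b hb hbx => ?upper, fun b hb => ?lower⟩⟩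
  case quota =>
    have hmem := hae _ hP.ae_pi_seatCount_mem a ha i (cumQ q t i) (cumQ_le_sum q t i) j
    exact eq_floor_or_eq_ceil_of_mem_Icc (mul_nonneg (hα0 j).le (Nat.cast_nonneg _)) hmem
  case unbiased => exact (hintegral _).trans (hP.integral_pi_seatCount (cumQ_le_sum q t i) i j)
  case upper => exact (hprob _).trans_le ((htail t j).measureReal_ge_le hx hb.le hbx)
  case lower => exact (hprob _).trans_le ((htail t j).measureReal_le_neg_le hx hb.le)
end

section
/- Let m ∈ ℕ with m ≥ 1, let α ∈ (0,1), and let λ satisfy α < λ < 1, λ ≥ 1/2 and λ·m ∈ ℕ. Then the upper tail of the binomial distribution satisfies B_α(m, λ) := ∑_{c = λm}^{m} C(m,c)·α^c·(1−α)^{m−c} ≥ (1/√(2m))·exp(−m·H(λ; α)), where H(λ; α) = λ·ln(λ/α) + (1−λ)·ln((1−λ)/(1−α)). -/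
open Finset

/-!
Only the first term `c = λm` of the tail is needed. Exponential tilting replaces its parameter `α`
by `λ` at the price of the factor `exp (-m H(λ; α))`, so it suffices that the binomial distribution
with parameters `m` and `λ = a / (a + b)`, `m = a + b`, has mass at least `1 / √(2m)` at `a`.

In Stirling form that mass is `s (a + b) / (s a * s b) * √(2m) / (√(2a) * √(2b))`, where `s` is
`stirlingSeq`. The second fraction is at least `2 / √(2m)` by AM-GM. The first is at least `1 / 2`:
the decrements of `log s` decrease, so the worst case is `a = b = 1`, where equality holds.
Bounding the three values of `s` separately by `√π` and `s 1` falls just short of the constant.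
-/

theorem add_le_zero_add_of_antitone_sub_succ {G : Type*} [AddCommGroup G] [PartialOrder G]
    [IsOrderedAddMonoid G] {f : ℕ → G} (hf : Antitone fun n => f n - f (n + 1)) (a b : ℕ) :
    f a + f b ≤ f 0 + f (a + b) := by
  induction a with
  | zero => simp only [zero_add, le_refl]
  | succ a ih =>
    have hdecr : f (a + b) + f (a + 1) ≤ f a + f (a + b + 1) :=
      sub_le_sub_iff.1 (hf (Nat.le_add_right a b))
    rw [Nat.add_right_comm]
    refine le_of_add_le_add_left (a := f a + f (a + b)) ?_
    calc f a + f (a + b) + (f (a + 1) + f b) = f (a + b) + f (a + 1) + (f a + f b) := by abel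
      _ ≤ f a + f (a + b + 1) + (f 0 + f (a + b)) := add_le_add hdecr ih
      _ = f a + f (a + b) + (f 0 + f (a + b + 1)) := by abel

section StirlingSeq

open Stirling

theorem antitone_log_stirlingSeq_sub_succ :
    Antitone fun n : ℕ => Real.log (stirlingSeq (n + 1)) - Real.log (stirlingSeq (n + 2)) := by
  intro n k hnk
  refine hasSum_le (fun j => ?_) (log_stirlingSeq_sdiff_hasSum k) (log_stirlingSeq_sdiff_hasSum n)
  gcongr

theorem stirlingSeq_pos {n : ℕ} (hn : n ≠ 0) : 0 < stirlingSeq n := by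
  obtain ⟨k, rfl⟩ := Nat.exists_eq_succ_of_ne_zero hn
  exact stirlingSeq'_pos k

theorem stirlingSeq_one_sq : stirlingSeq 1 ^ 2 = 2 * stirlingSeq 2 := by
  have hsqrt : √(2 * (2 : ℕ) : ℝ) = 2 := by
    rw [Nat.cast_ofNat, Real.sqrt_mul_self zero_le_two]
  rw [stirlingSeq_one, div_pow, Real.sq_sqrt zero_le_two, stirlingSeq, hsqrt,
    Nat.factorial_two, Nat.cast_ofNat, div_pow]
  field

theorem stirlingSeq_mul_stirlingSeq_le {a b : ℕ} (ha : a ≠ 0) (hb : b ≠ 0) :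
    stirlingSeq a * stirlingSeq b ≤ 2 * stirlingSeq (a + b) := by
  obtain ⟨a, rfl⟩ := Nat.exists_eq_succ_of_ne_zero ha
  obtain ⟨b, rfl⟩ := Nat.exists_eq_succ_of_ne_zero hb
  have hpos (n : ℕ) : 0 < stirlingSeq (n + 1) := stirlingSeq'_pos n
  have hsubadd : Real.log (stirlingSeq (a + 1)) + Real.log (stirlingSeq (b + 1)) ≤
      Real.log (stirlingSeq 1) + Real.log (stirlingSeq (a + b + 1)) :=
    add_le_zero_add_of_antitone_sub_succ (f := fun n => Real.log (stirlingSeq (n + 1)))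
      antitone_log_stirlingSeq_sub_succ a b
  have hdecr : Real.log (stirlingSeq (a + b + 1)) - Real.log (stirlingSeq (a + b + 2)) ≤
      Real.log (stirlingSeq 1) - Real.log (stirlingSeq 2) :=
    antitone_log_stirlingSeq_sub_succ (Nat.zero_le (a + b))
  have hone : 2 * Real.log (stirlingSeq 1) = Real.log 2 + Real.log (stirlingSeq 2) := by
    rw [← Real.log_mul two_ne_zero (hpos 1).ne', ← stirlingSeq_one_sq, Real.log_pow, Nat.cast_ofNat]
  rw [show a.succ + b.succ = a + b + 2 by lia,
    ← Real.log_le_log_iff (mul_pos (hpos a) (hpos b)) (mul_pos two_pos (hpos _)),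
    Real.log_mul (hpos a).ne' (hpos b).ne', Real.log_mul two_ne_zero (hpos _).ne']
  linarith

end StirlingSeq

section Binomial

open Stirling

theorem choose_mul_div_pow_eq_stirlingSeq {a b : ℕ} (ha : a ≠ 0) (hb : b ≠ 0) :
    ((a + b).choose a : ℝ) * (a / (a + b)) ^ a * (b / (a + b)) ^ b =
      stirlingSeq (a + b) / (stirlingSeq a * stirlingSeq b) *
        (√(2 * (a + b)) / (√(2 * a) * √(2 * b))) := by
  simp only [Nat.cast_add_choose, stirlingSeq, div_pow, pow_add, Nat.cast_add]
  field

theorem sqrt_two_mul_mul_sqrt_two_mul_le_add {x y : ℝ} (hx : 0 ≤ x) (hy : 0 ≤ y) :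
    √(2 * x) * √(2 * y) ≤ x + y := by
  rw [← Real.sqrt_mul (by positivity)]
  exact Real.sqrt_le_iff.2 ⟨by positivity, by linarith [four_mul_le_sq_add x y]⟩

theorem one_div_sqrt_le_choose_mul_div_pow_of_ne_zero {a b : ℕ} (ha : a ≠ 0) (hb : b ≠ 0) :
    1 / √(2 * (a + b)) ≤ ((a + b).choose a : ℝ) * (a / (a + b)) ^ a * (b / (a + b)) ^ b := by
  have hsa := stirlingSeq_pos ha
  have hsb := stirlingSeq_pos hb
  have hratio : 1 / 2 ≤ stirlingSeq (a + b) / (stirlingSeq a * stirlingSeq b) := by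
    rw [div_le_div_iff₀ two_pos (mul_pos hsa hsb)]
    linarith [stirlingSeq_mul_stirlingSeq_le ha hb]
  have hsqrt : √(2 * a) * √(2 * b) ≤ (a + b : ℝ) :=
    sqrt_two_mul_mul_sqrt_two_mul_le_add a.cast_nonneg b.cast_nonneg
  rw [choose_mul_div_pow_eq_stirlingSeq ha hb]
  calc 1 / √(2 * (a + b)) = 1 / 2 * (√(2 * (a + b)) / (a + b)) := by
        rw [div_mul_div_comm, one_mul, Real.sqrt_div_self']
    _ ≤ _ := by gcongr

theorem one_div_sqrt_le_div_self_pow_self (n : ℕ) : 1 / √(2 * n) ≤ (n / n : ℝ) ^ n := by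
  rcases eq_or_ne n 0 with rfl | hn
  · simp
  · have hn1 : (1 : ℝ) ≤ n := Nat.one_le_cast.2 (Nat.one_le_iff_ne_zero.2 hn)
    rw [div_self (by positivity), one_pow]
    exact div_le_one_of_le₀ (Real.one_le_sqrt.2 (by linarith)) (Real.sqrt_nonneg _)

theorem one_div_sqrt_le_choose_mul_div_pow (a b : ℕ) :
    1 / √(2 * (a + b)) ≤ ((a + b).choose a : ℝ) * (a / (a + b)) ^ a * (b / (a + b)) ^ b := by
  rcases eq_or_ne a 0 with rfl | ha
  · simpa using one_div_sqrt_le_div_self_pow_self b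
  rcases eq_or_ne b 0 with rfl | hb
  · simpa using one_div_sqrt_le_div_self_pow_self a
  exact one_div_sqrt_le_choose_mul_div_pow_of_ne_zero ha hb

/-- The Kullback–Leibler divergence `H(p; q)` between the Bernoulli distributions with parameters
`p` and `q`, meaningful for `0 < q < 1` and `0 ≤ p ≤ 1`. At `p = 0` and `p = 1`, the vanishing term
`0 * Real.log 0` is the usual convention `0 log 0 = 0`. -/
noncomputable def bernoulliKL (p q : ℝ) : ℝ :=
  p * Real.log (p / q) + (1 - p) * Real.log ((1 - p) / (1 - q))

theorem pow_mul_exp_neg_mul_log_div {n : ℕ} {x y : ℝ} (hx : n ≠ 0 → 0 < x) (hy : 0 < y) :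
    x ^ n * Real.exp (-(n * Real.log (x / y))) = y ^ n := by
  rcases eq_or_ne n 0 with rfl | hn
  · simp
  · have hx := hx hn
    rw [← mul_neg, ← Real.log_inv, inv_div, Real.exp_nat_mul, Real.exp_log (div_pos hy hx),
      ← mul_pow, mul_div_cancel₀ _ hx.ne']

theorem div_pow_mul_exp_neg_mul_bernoulliKL (a b : ℕ) {q : ℝ} (hq0 : 0 < q) (hq1 : q < 1) :
    (a / (a + b) : ℝ) ^ a * (b / (a + b)) ^ b *
        Real.exp (-(a + b) * bernoulliKL (a / (a + b)) q) =
      q ^ a * (1 - q) ^ b := by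
  have hq : 0 < 1 - q := sub_pos.2 hq1
  rcases eq_or_ne (a + b) 0 with hab | hab
  · obtain ⟨rfl, rfl⟩ := Nat.add_eq_zero_iff.1 hab
    simp
  have hab' : (a + b : ℝ) ≠ 0 := by exact_mod_cast hab
  have hcompl : 1 - (a / (a + b) : ℝ) = b / (a + b) := by field
  have hsplit : -(a + b) * bernoulliKL (a / (a + b)) q =
      -(a * Real.log (a / (a + b) / q)) + -(b * Real.log (b / (a + b) / (1 - q))) := by
    rw [bernoulliKL, hcompl]
    field
  rw [hsplit, Real.exp_add, mul_mul_mul_comm,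
    pow_mul_exp_neg_mul_log_div (fun ha => by positivity) hq0,
    pow_mul_exp_neg_mul_log_div (fun hb => by positivity) hq]

theorem one_div_sqrt_mul_exp_neg_mul_bernoulliKL_le (a b : ℕ) {q : ℝ} (hq0 : 0 < q)
    (hq1 : q < 1) :
    1 / √(2 * (a + b)) * Real.exp (-(a + b) * bernoulliKL (a / (a + b)) q) ≤
      (a + b).choose a * q ^ a * (1 - q) ^ b := by
  grw [one_div_sqrt_le_choose_mul_div_pow]
  rw [mul_assoc _ (q ^ a), ← div_pow_mul_exp_neg_mul_bernoulliKL a b hq0 hq1]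
  simp only [mul_assoc, le_refl]

end Binomial

theorem binomial_tail_lower_bound_general {m : ℕ} (hm : 1 ≤ m) {α lam : ℝ}
    (hα0 : 0 < α) (hα1 : α < 1) (hlam1 : lam ≤ 1) {l : ℕ} (hl : (l : ℝ) = lam * m) :
    1 / √(2 * m) * Real.exp (-m * bernoulliKL lam α) ≤
      ∑ c ∈ Icc l m, (m.choose c : ℝ) * α ^ c * (1 - α) ^ (m - c) := by
  have hm0 : (0 : ℝ) < m := by exact_mod_cast hm
  have hlm : l ≤ m := by
    have : (l : ℝ) ≤ m := hl ▸ mul_le_of_le_one_left hm0.le hlam1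
    exact_mod_cast this
  obtain rfl : lam = l / m := eq_div_of_mul_eq hm0.ne' hl.symm
  have : 0 < 1 - α := sub_pos.2 hα1
  obtain ⟨b, rfl⟩ := Nat.exists_eq_add_of_le hlm
  have hterm := one_div_sqrt_mul_exp_neg_mul_bernoulliKL_le l b hα0 hα1
  rw [← Nat.cast_add] at hterm
  calc _ ≤ ((l + b).choose l : ℝ) * α ^ l * (1 - α) ^ (l + b - l) := by
        rwa [Nat.add_sub_cancel_left]
    _ ≤ _ := single_le_sum (f := fun c => ((l + b).choose c : ℝ) * α ^ c * (1 - α) ^ (l + b - c))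
        (fun c _ => by positivity) (left_mem_Icc.2 hlm)

/-- Ahle's lower bound on the upper tail of the binomial
distribution: for λ ≥ 1/2 with α < λ < 1 and λ·m ∈ ℕ,
B_α(m, λ) ≥ (1/√(2m))·exp(−m·H(λ; α)), where H is the Bernoulli
Kullback–Leibler divergence. -/
theorem binomial_tail_lower_bound
    (m : ℕ) (hm : 1 ≤ m) (α lam : ℝ)
    (hα0 : 0 < α) (hα1 : α < 1)
    (hαlam : α < lam) (hlam1 : lam < 1) (hlamhalf : 1 / 2 ≤ lam)
    (l : ℕ) (hl : (l : ℝ) = lam * m) :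
    (1 / Real.sqrt (2 * m)) *
        Real.exp (-(m : ℝ) *
          (lam * Real.log (lam / α) + (1 - lam) * Real.log ((1 - lam) / (1 - α))))
      ≤ ∑ c ∈ Finset.Icc l m, (m.choose c : ℝ) * α ^ c * (1 - α) ^ (m - c) :=
  binomial_tail_lower_bound_general hm hα0 hα1 hlam1.le hl
end
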